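/- (Coboundedness principle, part 1.) Let X be a metric space, let G be a group with a (K,C)-quasi-action (A_g)_{g∈G} on X which is cobounded, let (A_i)_{i∈ι} be a locally finite family of nonempty subsets of X, and suppose G acts on the index set ι compatibly with the quasi-action with some constant C' ≥ 0. Then the action of G on ι has only finitely many orbits. -/

import Mathlib

/-- A `(K,C)`-quasi-isometric embedding between metric spaces. -/
def IsQIEmbedding {X Y : Type*} [MetricSpace X] [MetricSpace Y] (K C : ℝ) (f : X → Y) : Prop :=
  ∀ x x' : X, (1/K) * dist x x' - C ≤ dist (f x) (f x') ∧
    dist (f x) (f x') ≤ K * dist x x' + C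

/-- A `(K,C)`-quasi-isometry between metric spaces. -/
def IsQI {X Y : Type*} [MetricSpace X] [MetricSpace Y] (K C : ℝ) (f : X → Y) : Prop :=
  IsQIEmbedding K C f ∧ ∀ y : Y, ∃ x : X, dist (f x) y ≤ C

/-- A `(K,C)`-quasi-action of a group `G` on a metric space `X`. -/
def IsQuasiAction {G X : Type*} [Group G] [MetricSpace X] (K C : ℝ) (A : G → X → X) : Prop :=
  (∀ g : G, IsQI K C (A g)) ∧ ∀ (g h : G) (x : X), dist (A g (A h x)) (A (g * h) x) ≤ C

/-- A quasi-action is cobounded if some orbit is coarsely dense, uniformly. -/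
def CoboundedQA {G X : Type*} [Group G] [MetricSpace X] (A : G → X → X) : Prop :=
  ∃ r : ℝ, 0 ≤ r ∧ ∀ x y : X, ∃ g : G, dist (A g x) y ≤ r

/-- A family of nonempty subsets of `X` is locally finite if every bounded set meets
only finitely many members of the family. -/
def LocallyFiniteFamily {X ι : Type*} [MetricSpace X] (𝒜 : ι → Set X) : Prop :=
  (∀ i, (𝒜 i).Nonempty) ∧
    ∀ B : Set X, Bornology.IsBounded B → {i : ι | (𝒜 i ∩ B).Nonempty}.Finite

/-- An action of `G` on the index set `ι` is compatible with the quasi-action `A` on `X`,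
with constant `C'`, if `A_g(𝒜 i)` and `𝒜 (g • i)` are at Hausdorff distance at most `C'`. -/
def CompatibleIndexAction {G X ι : Type*} [Group G] [MetricSpace X] [MulAction G ι]
    (A : G → X → X) (𝒜 : ι → Set X) (C' : ℝ) : Prop :=
  ∀ (g : G) (i : ι),
    EMetric.hausdorffEdist ((A g) '' (𝒜 i)) (𝒜 (g • i)) ≤ ENNReal.ofReal C'

/-- **Coboundedness principle, part 1.**  Given a cobounded `(K,C)`-quasi-action of `G`
on `X`, a locally finite family of nonempty subsets of `X` indexed by `ι`, and a compatible
action of `G` on `ι`, the action of `G` on `ι` has only finitely many orbits. -/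
theorem coboundedness_principle_finitely_many_orbits
    {G X ι : Type*} [Group G] [MetricSpace X] [MulAction G ι]
    (K C C' : ℝ) (hK : 1 ≤ K) (hC : 0 ≤ C) (hC' : 0 ≤ C')
    (A : G → X → X) (hQA : IsQuasiAction K C A) (hcb : CoboundedQA A)
    (𝒜 : ι → Set X) (hlf : LocallyFiniteFamily 𝒜)
    (hcomp : CompatibleIndexAction A 𝒜 C') :
    Finite (MulAction.orbitRel.Quotient G ι) := by
  obtain ⟨r, hr, hcb⟩ := hcb
  obtain ⟨hne, hfin⟩ := hlf
  rcases isEmpty_or_nonempty ι with hι | ⟨⟨i₀⟩⟩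
  · infer_instance
  obtain ⟨x₀, -⟩ := hne i₀
  have hF := hfin (Metric.closedBall x₀ (r + (C' + 1))) Metric.isBounded_closedBall
  have : Finite {i : ι | (𝒜 i ∩ Metric.closedBall x₀ (r + (C' + 1))).Nonempty} := hF
  refine Finite.of_surjective
    (fun i : {i : ι | (𝒜 i ∩ Metric.closedBall x₀ (r + (C' + 1))).Nonempty} =>
      (Quotient.mk _ i.1 : MulAction.orbitRel.Quotient G ι)) ?_
  intro q
  induction q using Quotient.inductionOn with
  | h i =>
    obtain ⟨a, ha⟩ := hne i
    obtain ⟨g, hg⟩ := hcb a x₀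
    have hlt : Metric.hausdorffEDist ((A g) '' (𝒜 i)) (𝒜 (g • i)) < ENNReal.ofReal (C' + 1) :=
      lt_of_le_of_lt (hcomp g i)
        ((ENNReal.ofReal_lt_ofReal_iff (by linarith)).2 (by linarith))
    obtain ⟨y, hy, hd⟩ := Metric.exists_edist_lt_of_hausdorffEDist_lt
      (Set.mem_image_of_mem (A g) ha) hlt
    rw [edist_lt_ofReal] at hd
    refine ⟨⟨g • i, y, hy, ?_⟩, Quotient.sound ⟨g, rfl⟩⟩
    rw [Metric.mem_closedBall]
    have := dist_triangle_left y x₀ (A g a)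
    linarith
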